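/- Let φ : Cl ≃ Matrix (Fin 2^r) ℂ be any ℂ-algebra isomorphism with Φ the induced isomorphism of Cl ⊗ Cl onto Matrix ((Fin 2^r) × (Fin 2^r)) ℂ. Then Tr Φ(P_k) = 2·(2r)!/(k!(2r−k)!) for every k with 0 ≤ k ≤ r−1, and Tr Φ(P_r) = (2r)!/(r!)^2. -/

import Mathlib

open scoped TensorProduct

noncomputable section

/-- The quadratic form `x₁² + ⋯ + x_{2r}²` on `ℂ^{2r}`. -/
def Qf (r : ℕ) : QuadraticForm ℂ (Fin (2*r) → ℂ) :=
  QuadraticMap.weightedSumSquares ℂ (fun _ : Fin (2*r) => (1:ℂ))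

/-- The Clifford algebra of `Qf r`. -/
abbrev Cl (r : ℕ) := CliffordAlgebra (Qf r)

/-- The generators `Γ_i`. -/
def Γgen (r : ℕ) (i : Fin (2*r)) : Cl r :=
  CliffordAlgebra.ι (Qf r) (Pi.single i 1)

/-- The antisymmetrised products `Γ_{[i₁…i_k]}`. -/
def Γbr (r k : ℕ) (i : Fin k → Fin (2*r)) : Cl r :=
  ((k.factorial : ℂ))⁻¹ •
    ∑ σ : Equiv.Perm (Fin k),
      ((Equiv.Perm.sign σ : ℤ) : ℂ) • (List.ofFn fun j => Γgen r (i (σ j))).prod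

/-- The invariants `I_k ∈ Cl ⊗ Cl`. -/
def Ik (r k : ℕ) : Cl r ⊗[ℂ] Cl r :=
  ∑ i : Fin k → Fin (2*r), (Γbr r k i) ⊗ₜ[ℂ] (Γbr r k i)

/-- The split Casimir element `Ĉ = −I₂/(16(2r−2))`. -/
def sC (r : ℕ) : Cl r ⊗[ℂ] Cl r := (-(16*(2*(r:ℂ)-2))⁻¹) • Ik r 2

/-- The top element `Γ_{2r+1} = (−i)^r Γ₁⋯Γ_{2r}`. -/
def Γtop (r : ℕ) : Cl r :=
  ((-Complex.I)^r) • (List.ofFn fun i : Fin (2*r) => Γgen r i).prod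

/-- The chirality projector `p_ε = (1 + ε Γ_{2r+1})/2`. -/
def pCh (r : ℕ) (ε : ℂ) : Cl r := (2:ℂ)⁻¹ • (1 + ε • Γtop r)

/-- The chirality projectors `p_{εε'} = p_ε ⊗ p_{ε'}`. -/
def ppCh (r : ℕ) (ε ε' : ℂ) : Cl r ⊗[ℂ] Cl r := (pCh r ε) ⊗ₜ[ℂ] (pCh r ε')

/-- The eigenvalues `c_k = (2k(2r−k) − r(2r−1))/(16(r−1))`. -/
def cEv (r k : ℕ) : ℂ :=
  (2*(k:ℂ)*(2*(r:ℂ)-(k:ℂ)) - (r:ℂ)*(2*(r:ℂ)-1)) / (16*((r:ℂ)-1))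

/-- The spectral projectors `P_k = Π_{j≠k} (Ĉ − c_j)/(c_k − c_j)`. -/
def Pk (r k : ℕ) : Cl r ⊗[ℂ] Cl r :=
  (((List.range (r+1)).filter (fun j => j ≠ k)).map
    (fun j => (cEv r k - cEv r j)⁻¹ • (sC r - cEv r j • 1))).prod

/-- `P_r^S = (p_{++} + p_{−−})·P_r`. -/
def PrS (r : ℕ) : Cl r ⊗[ℂ] Cl r := (ppCh r 1 1 + ppCh r (-1) (-1)) * Pk r r

/-- The ascending factorial `a_k(u) = (u/2)(u/2+1)⋯(u/2+k−1)`. -/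
def asc (u : ℂ) (k : ℕ) : ℂ := ∏ j ∈ Finset.range k, (u/2 + (j:ℂ))

/-!
`I₂ = I₁² - 2r`, so the split Casimir element, and with it each `P_k`, is a polynomial in
`I₁ = ∑ Aᵢ`, where the `Aᵢ = Γᵢ ⊗ Γᵢ` are commuting involutions. Conjugation by
`Γᵢ Γ_{2r+1} ⊗ 1` negates `Aᵢ` and fixes the other `Aⱼ`; this uses that the dimension is even.
Hence a tracial functional `τ` cannot distinguish the `Aᵢ` from independent random signs:
`τ (p(I₁)) / τ 1` is the mean of `p(2r - 2m)` over a binomially distributed `m`. The value of `Ĉ` at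
`I₁ = 2r - 2m` is `c_m`, and `c_m = c_k` exactly for `m = k` and `m = 2r - k`; this is where the
factor `2` comes from when `k < r`.
-/

section Aeval

open Polynomial

variable {R M : Type*} [CommSemiring R] [Semiring M] [Algebra R M]

lemma commute_aeval {d x : M} (h : Commute d x) (p : R[X]) : Commute d (aeval x p) :=
  Algebra.commute_of_mem_adjoin_singleton_of_commute (aeval_mem_adjoin_singleton R x) h

lemma mul_aeval_congr {e x y : M} (he : Commute e y) (h : e * x = e * y) (p : R[X]) :
    e * aeval x p = e * aeval y p := by
  have hpow (n : ℕ) : e * x ^ n = e * y ^ n := by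
    induction n with
    | zero => rw [pow_zero, pow_zero]
    | succ n ih =>
      calc e * x ^ (n + 1) = e * y ^ n * x := by rw [pow_succ, ← mul_assoc, ih]
        _ = y ^ n * (e * y) := by rw [(he.pow_right n).eq, mul_assoc, h]
        _ = e * y ^ (n + 1) := by rw [← mul_assoc, ← (he.pow_right n).eq, mul_assoc, ← pow_succ]
  simp only [aeval_eq_sum_range, Finset.mul_sum, mul_smul_comm, hpow]

end Aeval

section InvolutionSums

open Polynomial

variable {ι R M N : Type*} [CommRing R] [Ring M] [Algebra R M]

/-- Pairwise commuting involutions `a i`, each of which can be negated by conjugation with a unit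
that fixes all the others. Under a tracial functional they behave like independent random signs. -/
structure IsIndependentSigns (a : ι → M) : Prop where
  mul_self (i : ι) : a i * a i = 1
  commute (i j : ι) : Commute (a i) (a j)
  exists_flip (i : ι) :
    ∃ d : M, IsUnit d ∧ SemiconjBy d (a i) (-a i) ∧ ∀ j, j ≠ i → Commute d (a j)

lemma map_eq_zero_of_semiconjBy_neg [AddCommGroup N] [IsAddTorsionFree N] {τ : M →+ N}
    (hτ : ∀ x y, τ (x * y) = τ (y * x)) {d x : M} (hd : IsUnit d) (h : SemiconjBy d x (-x)) :
    τ x = 0 := by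
  obtain ⟨u, rfl⟩ := hd
  refine self_eq_neg.1 ?_
  calc τ x = τ (↑u⁻¹ * (u * x)) := by rw [Units.inv_mul_cancel_left]
    _ = τ (-x * u * ↑u⁻¹) := by rw [h.eq, hτ]
    _ = -τ x := by rw [Units.mul_inv_cancel_right, map_neg]

lemma two_mul_aeval_add_involution {a x : M} (ha : a * a = 1) (hax : Commute a x) (p : R[X]) :
    2 * aeval (x + a) p = (1 + a) * aeval (x + 1) p + (1 - a) * aeval (x - 1) p := by
  have hadd : (1 + a) * aeval (x + a) p = (1 + a) * aeval (x + 1) p :=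
    mul_aeval_congr ((Commute.one_left _).add_left (hax.add_right (Commute.one_right a)))
      (by simp only [add_mul, mul_add, ha, mul_one, one_mul]; abel) p
  have hsub : (1 - a) * aeval (x + a) p = (1 - a) * aeval (x - 1) p :=
    mul_aeval_congr ((Commute.one_left _).sub_left (hax.sub_right (Commute.one_right a)))
      (by simp only [sub_mul, mul_add, mul_sub, ha, mul_one, one_mul]; abel) p
  rw [← hadd, ← hsub, ← add_mul, add_add_sub_cancel, one_add_one_eq_two]

variable [AddCommGroup N] [Module R N] [IsAddTorsionFree N]

lemma two_smul_map_aeval_add_involution {τ : M →ₗ[R] N} (hτ : ∀ x y, τ (x * y) = τ (y * x))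
    {a d x : M} (ha : a * a = 1) (hax : Commute a x) (hd : IsUnit d)
    (hda : SemiconjBy d a (-a)) (hdx : Commute d x) (p : R[X]) :
    (2 : R) • τ (aeval (x + a) p) = τ (aeval (x + 1) p) + τ (aeval (x - 1) p) := by
  have hzero {y : M} (hy : Commute d y) : τ (a * aeval y p) = 0 :=
    map_eq_zero_of_semiconjBy_neg (τ := τ.toAddMonoidHom) hτ hd
      (neg_mul a _ ▸ hda.mul_right (commute_aeval hy p))
  rw [← map_smul, ofNat_smul_eq_nsmul, nsmul_eq_mul, Nat.cast_ofNat,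
    two_mul_aeval_add_involution ha hax, map_add, add_mul, sub_mul, map_add, map_sub, one_mul,
    one_mul, hzero (hdx.add_right (Commute.one_right d)),
    hzero (hdx.sub_right (Commute.one_right d)), add_zero, sub_zero]

theorem IsIndependentSigns.two_pow_card_smul_map_aeval_sum {a : ι → M}
    (ha : IsIndependentSigns a) {τ : M →ₗ[R] N} (hτ : ∀ x y, τ (x * y) = τ (y * x))
    (s : Finset ι) (p : R[X]) :
    (2 : R) ^ s.card • τ (aeval (∑ i ∈ s, a i) p) =
      ∑ t ∈ s.powerset, p.eval ((s.card : R) - 2 * t.card) • τ 1 := by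
  classical
  induction s using Finset.induction_on generalizing p with
  | empty =>
    have hconst : aeval (0 : M) p = p.eval 0 • 1 := by
      rw [← map_zero (algebraMap R M), aeval_algebraMap_apply_eq_algebraMap_eval,
        Algebra.algebraMap_eq_smul_one]
    simp [hconst]
  | insert i s hi ih =>
    obtain ⟨d, hd, hdi, hds⟩ := ha.exists_flip i
    have hshift : (2 : R) • τ (aeval (∑ j ∈ s, a j + a i) p) =
        τ (aeval (∑ j ∈ s, a j) (p.comp (X + 1))) + τ (aeval (∑ j ∈ s, a j) (p.comp (X - 1))) := by
      rw [two_smul_map_aeval_add_involution hτ (ha.mul_self i)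
        (Commute.sum_right _ _ _ fun j _ => ha.commute i j) hd hdi
        (Commute.sum_right _ _ _ fun j hj => hds j (ne_of_mem_of_not_mem hj hi))]
      simp [aeval_comp]
    rw [Finset.card_insert_of_notMem hi, pow_succ, mul_smul, Finset.sum_insert hi, add_comm (a i),
      hshift, smul_add, ih, ih, Finset.sum_powerset_insert hi]
    congr 1 <;> refine Finset.sum_congr rfl fun t ht => ?_
    · simp only [eval_comp, eval_add, eval_X, eval_one, Nat.cast_add, Nat.cast_one]
      ring_nf
    · rw [Finset.card_insert_of_notMem fun h => hi (Finset.mem_powerset.1 ht h)]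
      simp only [eval_comp, eval_sub, eval_X, eval_one, Nat.cast_add, Nat.cast_one]
      ring_nf

end InvolutionSums

lemma semiconjBy_prod_map_of_pairwise_neg {ι R : Type*} [DecidableEq ι] [Ring R] {γ : ι → R}
    (hγ : Pairwise fun i j => SemiconjBy (γ i) (γ j) (-γ j)) (j : ι) (l : List ι) :
    SemiconjBy (l.map γ).prod (γ j) ((-1) ^ (l.length + l.count j) * γ j) := by
  induction l with
  | nil => simp
  | cons i l ih =>
    rw [List.map_cons, List.prod_cons]
    refine SemiconjBy.mul_left ?_ ih
    have hsign : SemiconjBy (γ i) ((-1) ^ (l.length + l.count j)) ((-1) ^ (l.length + l.count j)) :=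
      (Commute.neg_one_right (γ i)).pow_right _
    obtain rfl | hij := eq_or_ne i j
    · convert hsign.mul_right (Commute.refl (γ i) : SemiconjBy (γ i) (γ i) (γ i)) using 1
      simp [pow_add]
    · convert hsign.mul_right (hγ hij) using 1
      simp [hij, pow_add]

section CliffordGenerators

variable (r : ℕ)

lemma Γgen_mul_self (i : Fin (2 * r)) : Γgen r i * Γgen r i = 1 := by
  have hQ : Qf r (Pi.single i 1) = 1 := by
    simp [Qf, QuadraticMap.weightedSumSquares_apply, Pi.single_apply]
  rw [Γgen, CliffordAlgebra.ι_sq_scalar, hQ, map_one]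

variable {r}

lemma semiconjBy_Γgen {i j : Fin (2 * r)} (hij : i ≠ j) :
    SemiconjBy (Γgen r i) (Γgen r j) (-Γgen r j) := by
  have hortho : (Qf r).IsOrtho (Pi.single i 1) (Pi.single j 1) := by
    simp [QuadraticMap.isOrtho_def, Qf, QuadraticMap.weightedSumSquares_apply, Pi.single_apply,
      mul_add, Finset.sum_add_distrib, hij, hij.symm]
  rw [SemiconjBy, neg_mul]
  exact CliffordAlgebra.ι_mul_ι_comm_of_isOrtho hortho

lemma isUnit_Γgen (i : Fin (2 * r)) : IsUnit (Γgen r i) :=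
  ⟨⟨Γgen r i, Γgen r i, Γgen_mul_self r i, Γgen_mul_self r i⟩, rfl⟩

lemma isUnit_Γtop : IsUnit (Γtop r) := by
  have hprod : IsUnit (List.ofFn (Γgen r)).prod :=
    List.prod_isUnit fun x hx => by
      obtain ⟨i, rfl⟩ := (List.mem_ofFn' _ _).1 hx
      exact isUnit_Γgen i
  have hscalar : (-Complex.I) ^ r ≠ 0 := pow_ne_zero r (neg_ne_zero.2 Complex.I_ne_zero)
  exact hprod.smul (Units.mk0 _ hscalar)

lemma semiconjBy_Γtop (j : Fin (2 * r)) : SemiconjBy (Γtop r) (Γgen r j) (-Γgen r j) := by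
  have hprod := semiconjBy_prod_map_of_pairwise_neg (γ := Γgen r) (fun _ _ => semiconjBy_Γgen) j
    (List.finRange (2 * r))
  rw [List.length_finRange, List.count_finRange, (odd_two_mul_add_one r).neg_one_pow,
    neg_one_mul, ← List.ofFn_eq_map] at hprod
  exact hprod.smul_left _

lemma isIndependentSigns_Γgen_tmul_Γgen :
    IsIndependentSigns fun i => Γgen r i ⊗ₜ[ℂ] Γgen r i where
  mul_self i := by simp [Γgen_mul_self, Algebra.TensorProduct.one_def]
  commute i j := by
    obtain rfl | hij := eq_or_ne i j
    · exact Commute.refl _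
    · simp [Commute, SemiconjBy, (semiconjBy_Γgen hij).eq, TensorProduct.neg_tmul,
        TensorProduct.tmul_neg]
  exists_flip i := by
    have hflip : SemiconjBy (Γgen r i * Γtop r) (Γgen r i) (-Γgen r i) :=
      SemiconjBy.mul_left (Commute.neg_right (Commute.refl _)) (semiconjBy_Γtop i)
    have hfix (j) (hji : j ≠ i) : Commute (Γgen r i * Γtop r) (Γgen r j) :=
      SemiconjBy.mul_left (by simpa using (semiconjBy_Γgen hji.symm).neg_right)
        (semiconjBy_Γtop j)
    refine ⟨(Γgen r i * Γtop r) ⊗ₜ 1, ?_, ?_, fun j hji => ?_⟩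
    · exact ((isUnit_Γgen i).mul isUnit_Γtop).map
        (Algebra.TensorProduct.includeLeft (R := ℂ) (S := ℂ) (A := Cl r) (B := Cl r))
    · simp [SemiconjBy, hflip.eq, TensorProduct.neg_tmul]
    · simp [Commute, SemiconjBy, (hfix j hji).eq]

end CliffordGenerators

section SplitCasimir

open Polynomial

variable (r : ℕ)

lemma Ik_one : Ik r 1 = ∑ i, Γgen r i ⊗ₜ[ℂ] Γgen r i := by
  rw [Ik, ← (Equiv.funUnique (Fin 1) (Fin (2 * r))).symm.sum_comp]
  simp [Γbr]

lemma Γbr_two (i j : Fin (2 * r)) :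
    Γbr r 2 ![i, j] = if i = j then 0 else Γgen r i * Γgen r j := by
  have hbr : Γbr r 2 ![i, j] = (2 : ℂ)⁻¹ • (Γgen r i * Γgen r j - Γgen r j * Γgen r i) := by
    have hperm : (Finset.univ : Finset (Equiv.Perm (Fin 2))) = {1, Equiv.swap 0 1} := by decide
    rw [Γbr, hperm, Finset.sum_pair (by decide)]
    simp [List.ofFn_succ, sub_eq_add_neg]
  rw [hbr]
  split_ifs with hij
  · rw [hij, sub_self, smul_zero]
  · rw [(semiconjBy_Γgen (Ne.symm hij)).eq, neg_mul, sub_neg_eq_add, ← two_smul ℂ (_ * _),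
      inv_smul_smul₀ two_ne_zero]

lemma Ik_two : Ik r 2 = Ik r 1 ^ 2 - (2 * r : ℂ) • 1 := by
  have hbr (i j : Fin (2 * r)) : Γbr r 2 ![i, j] ⊗ₜ[ℂ] Γbr r 2 ![i, j] =
      (Γgen r i ⊗ₜ[ℂ] Γgen r i) * (Γgen r j ⊗ₜ[ℂ] Γgen r j) - if i = j then 1 else 0 := by
    rw [Γbr_two]
    split_ifs with hij
    · simp [hij, Γgen_mul_self, Algebra.TensorProduct.one_def]
    · simp
  rw [Ik, ← (finTwoArrowEquiv (Fin (2 * r))).symm.sum_comp, Fintype.sum_prod_type]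
  simp only [finTwoArrowEquiv_symm_apply, hbr, Finset.sum_sub_distrib]
  rw [Ik_one, pow_two, Finset.sum_mul_sum]
  simp [← Nat.cast_smul_eq_nsmul ℂ]

/-- The quadratic polynomial expressing the split Casimir element through `I₁ = ∑ Γᵢ ⊗ Γᵢ`. -/
def casimirPoly : ℂ[X] := C (-(16 * (2 * (r : ℂ) - 2))⁻¹) * (X ^ 2 - C (2 * r : ℂ))

lemma aeval_casimirPoly : aeval (Ik r 1) (casimirPoly r) = sC r := by
  rw [casimirPoly, sC, Ik_two, map_mul, map_sub, map_pow, aeval_X, aeval_C, aeval_C,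
    ← Algebra.smul_def, Algebra.algebraMap_eq_smul_one]

lemma Pk_eq_aeval_basis (k : ℕ) :
    Pk r k = aeval (sC r) (Lagrange.basis (Finset.range (r + 1)) (cEv r) k) := by
  set l := (List.range (r + 1)).filter (fun j => j ≠ k) with hl
  have herase : (Finset.range (r + 1)).erase k = l.toFinset := by ext; simp [hl, and_comm]
  rw [Lagrange.basis, herase, List.prod_toFinset _ (List.nodup_range.filter _), map_list_prod,
    List.map_map, Pk]
  congr 2 with j
  simp [Lagrange.basisDivisor, Algebra.algebraMap_eq_smul_one]

variable {r}

lemma eval_casimirPoly (hr : r ≠ 1) (m : ℕ) :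
    (casimirPoly r).eval (2 * r - 2 * m : ℂ) = cEv r m := by
  have hr' : (r : ℂ) - 1 ≠ 0 := sub_ne_zero.2 (mod_cast hr)
  have hdenom : 2 * (r : ℂ) - 2 = 2 * (r - 1) := by ring
  simp only [casimirPoly, cEv, eval_mul, eval_C, eval_sub, eval_pow, eval_X, hdenom]
  field_simp [hr']
  ring

lemma cEv_eq_cEv_iff (hr : r ≠ 1) {j k : ℕ} : cEv r j = cEv r k ↔ j = k ∨ j + k = 2 * r := by
  have hr' : 16 * ((r : ℂ) - 1) ≠ 0 := mul_ne_zero (by norm_num) (sub_ne_zero.2 (mod_cast hr))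
  have hfactor : cEv r j = cEv r k ↔ ((j : ℂ) - k) * (j + k - 2 * r) = 0 := by
    rw [cEv, cEv, div_left_inj' hr']
    constructor <;> intro h
    · linear_combination -h / 2
    · linear_combination -2 * h
  rw [hfactor, mul_eq_zero, sub_eq_zero, sub_eq_zero]
  norm_cast

lemma eval_basis_cEv (hr : r ≠ 1) {k m : ℕ} (hk : k ≤ r) (hm : m ≤ 2 * r) :
    (Lagrange.basis (Finset.range (r + 1)) (cEv r) k).eval (cEv r m) =
      if m = k ∨ m = 2 * r - k then 1 else 0 := by
  split_ifs with h
  · have hinj : Set.InjOn (cEv r) (Finset.range (r + 1)) := by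
      intro i hi j hj hij
      simp only [Finset.coe_range, Set.mem_Iio] at hi hj
      obtain h | h := (cEv_eq_cEv_iff hr).1 hij <;> lia
    rw [(cEv_eq_cEv_iff hr).2 (by lia : m = k ∨ m + k = 2 * r)]
    exact Lagrange.eval_basis_self hinj (by simpa [Nat.lt_succ_iff] using hk)
  · obtain ⟨j, hjr, hjk, hj⟩ : ∃ j ≤ r, j ≠ k ∧ (m = j ∨ m + j = 2 * r) := by
      obtain hmr | hmr := le_total m r
      · exact ⟨m, by lia⟩
      · exact ⟨2 * r - m, by lia⟩
    rw [(cEv_eq_cEv_iff hr).2 hj]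
    exact Lagrange.eval_basis_of_ne hjk.symm (by simpa [Nat.lt_succ_iff] using hjr)

theorem two_pow_mul_map_Pk (hr : r ≠ 1) {k : ℕ} (hk : k ≤ r) {τ : Cl r ⊗[ℂ] Cl r →ₗ[ℂ] ℂ}
    (hτ : ∀ x y, τ (x * y) = τ (y * x)) :
    2 ^ (2 * r) * τ (Pk r k) = (∑ m ∈ {k, 2 * r - k}, ((2 * r).choose m : ℂ)) * τ 1 := by
  set p : ℂ[X] := (Lagrange.basis (Finset.range (r + 1)) (cEv r) k).comp (casimirPoly r) with hp
  have hPk : Pk r k = aeval (∑ i, Γgen r i ⊗ₜ[ℂ] Γgen r i) p := by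
    rw [Pk_eq_aeval_basis, ← aeval_casimirPoly, ← aeval_comp, Ik_one]
  have heval {m : ℕ} (hm : m ≤ 2 * r) :
      p.eval (2 * r - 2 * m : ℂ) = if m ∈ ({k, 2 * r - k} : Finset ℕ) then 1 else 0 := by
    simpa only [hp, eval_comp, eval_casimirPoly hr, Finset.mem_insert, Finset.mem_singleton]
      using eval_basis_cEv hr hk hm
  have hsubset : {k, 2 * r - k} ⊆ Finset.range (2 * r + 1) := by
    intro m hm
    simp only [Finset.mem_insert, Finset.mem_singleton] at hm
    exact Finset.mem_range.2 (by lia)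
  calc 2 ^ (2 * r) * τ (Pk r k)
      = ∑ t : Finset (Fin (2 * r)), p.eval (2 * r - 2 * t.card : ℂ) * τ 1 := by
        simpa [hPk] using
          isIndependentSigns_Γgen_tmul_Γgen.two_pow_card_smul_map_aeval_sum hτ Finset.univ p
    _ = ∑ m ∈ Finset.range (2 * r + 1), (2 * r).choose m • (p.eval (2 * r - 2 * m : ℂ) * τ 1) := by
        simpa using Finset.sum_powerset_apply_card (x := (Finset.univ : Finset (Fin (2 * r))))
          fun m => p.eval (2 * r - 2 * m : ℂ) * τ 1
    _ = ∑ m ∈ Finset.range (2 * r + 1),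
          if m ∈ ({k, 2 * r - k} : Finset ℕ) then (2 * r).choose m * τ 1 else 0 := by
        refine Finset.sum_congr rfl fun m hm => ?_
        simp [heval (Finset.mem_range_succ_iff.1 hm)]
    _ = (∑ m ∈ {k, 2 * r - k}, ((2 * r).choose m : ℂ)) * τ 1 := by
        rw [Finset.sum_ite_mem, Finset.inter_eq_right.2 hsubset, Finset.sum_mul]

end SplitCasimir

theorem Pk_traces_general (r : ℕ) (hr : 2 ≤ r) (τ : Cl r ⊗[ℂ] Cl r →ₗ[ℂ] ℂ)
    (hτ : ∀ x y, τ (x * y) = τ (y * x)) :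
    (∀ k : ℕ, k ≤ r - 1 →
      τ (Pk r k) = τ 1 / 2 ^ (2 * r) *
        (2 * ((2 * r).factorial : ℂ) / ((k.factorial : ℂ) * ((2 * r - k).factorial : ℂ)))) ∧
    τ (Pk r r) = τ 1 / 2 ^ (2 * r) * (((2 * r).factorial : ℂ) / (r.factorial : ℂ) ^ 2) := by
  have hpow : (2 : ℂ) ^ (2 * r) ≠ 0 := pow_ne_zero _ two_ne_zero
  have htrace {k : ℕ} (hk : k ≤ r) : τ (Pk r k) =
      τ 1 / 2 ^ (2 * r) * ∑ m ∈ {k, 2 * r - k}, ((2 * r).choose m : ℂ) := by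
    rw [← mul_right_inj' hpow, two_pow_mul_map_Pk (by lia) hk hτ]
    field_simp
  refine ⟨fun k hk => ?_, ?_⟩
  · rw [htrace (by lia), Finset.sum_pair (by lia), Nat.choose_symm (by lia),
      Nat.cast_choose ℂ (by lia : k ≤ 2 * r), ← two_mul, mul_div_assoc]
  · have hrr : 2 * r - r = r := by lia
    rw [htrace le_rfl, hrr, Finset.pair_eq_singleton, Finset.sum_singleton,
      Nat.cast_choose ℂ (by lia : r ≤ 2 * r), hrr, pow_two]

/-- traces of the spectral projectors `P_k` of `Ĉ`. -/
theorem Pk_traces (r : ℕ) (hr : 2 ≤ r)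
    (φ : Cl r ≃ₐ[ℂ] Matrix (Fin (2^r)) (Fin (2^r)) ℂ)
    (Φ : Cl r ⊗[ℂ] Cl r →ₐ[ℂ] Matrix (Fin (2^r) × Fin (2^r)) (Fin (2^r) × Fin (2^r)) ℂ)
    (hΦ : ∀ a b : Cl r, Φ (a ⊗ₜ[ℂ] b) = Matrix.kroneckerMap (· * ·) (φ a) (φ b)) :
    (∀ k : ℕ, k ≤ r - 1 →
      Matrix.trace (Φ (Pk r k))
        = 2 * ((2*r).factorial : ℂ) / ((k.factorial : ℂ) * ((2*r-k).factorial : ℂ))) ∧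
    Matrix.trace (Φ (Pk r r)) = ((2*r).factorial : ℂ) / ((r.factorial : ℂ))^2 := by
  simpa [two_mul, pow_add] using Pk_traces_general r hr
    (Matrix.traceLinearMap _ ℂ ℂ ∘ₗ Φ.toLinearMap) fun x y => by simp [Matrix.trace_mul_comm (Φ x)]

end
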